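/- arXiv:0708.3105 — 2 statements merged into one kernel-verified Lean document; each statement's English description precedes it below -/
import Mathlib

section
/- Let I be a nonzero proper ideal in a reduced Noetherian local ring (A,m,k), let C be the integral closure of A in its total ring of fractions, let R = A[It] ⊆ C[t] be the Rees algebra, and let T be the integral closure of R in C[t]. (1) If q is a prime ideal of T containing the set {at : a ∈ I}, then q contains T ∩ tC[t] (the ideal of elements of T with zero constant term). (2) The same holds with T replaced by S = {b ∈ T : b is weakly subintegral over R}: if q is a prime ideal of S containing {at : a ∈ I}, then q contains S ∩ tC[t]. -/
open Polynomial

/-- An element `b` is weakly subintegral over a subset (subring) `R` of `B`: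
there are `q ≥ 0` and `a_i ∈ R` (`1 ≤ i ≤ 2q+1`) with
`b^n + ∑_{i=1}^n (n choose i) a_i b^{n-i} = 0` for `q+1 ≤ n ≤ 2q+1`. -/
def WSubOver {B : Type*} [CommRing B] (R : Set B) (b : B) : Prop :=
  ∃ q : ℕ, ∃ a : ℕ → B, (∀ i, a i ∈ R) ∧
    ∀ n, q + 1 ≤ n → n ≤ 2 * q + 1 →
      b ^ n + ∑ i ∈ Finset.Icc 1 n, (n.choose i : B) * a i * b ^ (n - i) = 0

/-- The Rees algebra `R = A[It]`, as the `A`-subalgebra of `C[t]` generated by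
`{at : a ∈ I}`, where `C` is the integral closure of `A` in its total quotient ring `K`
and `t` is the polynomial variable. -/
noncomputable def reesIn {A : Type*} [CommRing A] (I : Ideal A) (K : Type*) [CommRing K]
    [Algebra A K] : Subalgebra A (Polynomial ↥(integralClosure A K)) :=
  Algebra.adjoin A
    {p : Polynomial ↥(integralClosure A K) | ∃ a ∈ I,
      p = Polynomial.monomial 1 (algebraMap A ↥(integralClosure A K) a)}

/-! A grading on `T` is a coaction `T → T[Y]`, sending `x = ∑ xᵢ` to `∑ xᵢ Yⁱ`; the coaction
`f(t) ↦ f(tY)` of `C[t]` restricts to `R` and, by integrality of coefficients, to `T`. Let `q` be a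
prime of `T` containing `It`, hence all of `R₊`. The composite `T → T[Y] → (T/q)[Y]` maps `R` to
constants, so every element of its image is integral over the domain `T/q` and is itself constant:
`xᵢ ∈ q` for all `x ∈ T` and `i > 0`. Primes of intermediate rings `R ⊆ S ⊆ T`, such as the weak
normalization, are contracted from `T` by lying over. -/

/-- For an injective `f : R →+* D`, the polynomials over `D` that lift along `f` form a copy of
`R[X]`. -/
noncomputable def liftsEquiv {R D : Type*} [Semiring R] [Semiring D] (f : R →+* D)
    (hf : Function.Injective f) : R[X] ≃+* lifts f :=
  RingEquiv.ofLeftInverseS (Function.leftInverse_invFun (map_injective f hf))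

theorem natDegree_eq_zero_of_isIntegral {D : Type*} [CommRing D] [IsDomain D] {f : D[X]}
    (hf : IsIntegral D f) : f.natDegree = 0 := by
  by_contra hdeg
  have hlead : f.leadingCoeff ∈ nonZeroDivisors D :=
    mem_nonZeroDivisors_of_ne_zero (leadingCoeff_ne_zero.mpr (by rintro rfl; simp at hdeg))
  exact f.transcendental hdeg hlead hf.isAlgebraic

section Grading

variable {B : Type*} [CommRing B]

/-- The coaction `f(X) ↦ f(XY)` of the degree grading on `B[X]`; the outer variable is `Y`. -/
noncomputable def gradingCoaction : B[X] →+* B[X][X] :=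
  (aeval (monomial 1 X) : B[X] →ₐ[B] B[X][X]).toRingHom

theorem coeff_gradingCoaction (f : B[X]) (n : ℕ) :
    (gradingCoaction f).coeff n = monomial n (f.coeff n) := by
  induction f using Polynomial.induction_on' with
  | add p q hp hq => simp only [map_add, coeff_add, hp, hq]
  | monomial m b =>
    have hmonomial : gradingCoaction (monomial m b) = monomial m (monomial m b) := by
      simp [gradingCoaction, aeval_monomial, monomial_pow, Polynomial.algebraMap_apply,
        C_mul_monomial, C_mul_X_pow_eq_monomial]
    rw [hmonomial, coeff_monomial, coeff_monomial]
    split_ifs with h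
    · rw [h]
    · rw [map_zero]

theorem eval_one_gradingCoaction (f : B[X]) : (gradingCoaction f).eval 1 = f := by
  have hid : (evalRingHom 1).comp gradingCoaction = RingHom.id B[X] := by
    ext <;> simp [gradingCoaction]
  exact RingHom.congr_fun hid f

variable {A : Type*} [CommRing A] [Algebra A B[X]] {S : Subalgebra A B[X]}

/-- A subalgebra of `B[X]` is graded if it contains the homogeneous components `fₖ Xᵏ` of each of
its elements `f`. Scalars need not be constant polynomials, so this applies to integral closures
of subrings of `B[X]`. -/
def IsGradedSubalgebra (S : Subalgebra A B[X]) : Prop :=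
  ∀ f ∈ S, ∀ k, monomial k (f.coeff k) ∈ S

namespace IsGradedSubalgebra

theorem gradingCoaction_mem_lifts (hS : IsGradedSubalgebra S) (f : S) :
    gradingCoaction (f : B[X]) ∈ lifts (algebraMap S B[X]) := by
  rw [lifts_iff_coeff_lifts]
  intro n
  rw [coeff_gradingCoaction]
  exact ⟨⟨_, hS f f.2 n⟩, rfl⟩

/-- The restriction `S → S[Y]` of `gradingCoaction` to a graded subalgebra; the coefficient of `Yⁿ`
is the homogeneous component of degree `n`. -/
noncomputable def coaction (hS : IsGradedSubalgebra S) : S →+* S[X] :=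
  (liftsEquiv (algebraMap S B[X]) Subtype.val_injective).symm.toRingHom.comp
    ((gradingCoaction.comp (algebraMap S B[X])).codRestrict (lifts (algebraMap S B[X]))
      hS.gradingCoaction_mem_lifts)

theorem map_coaction (hS : IsGradedSubalgebra S) (f : S) :
    (hS.coaction f).map (algebraMap S B[X]) = gradingCoaction (f : B[X]) :=
  congrArg Subtype.val
    (RingEquiv.apply_symm_apply (liftsEquiv (algebraMap S B[X]) Subtype.val_injective) _)

theorem coe_coeff_coaction (hS : IsGradedSubalgebra S) (f : S) (n : ℕ) :
    ((hS.coaction f).coeff n : B[X]) = monomial n ((f : B[X]).coeff n) := by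
  rw [← coeff_gradingCoaction, ← hS.map_coaction, coeff_map]
  rfl

theorem eval_one_coaction (hS : IsGradedSubalgebra S) (f : S) :
    (hS.coaction f).eval 1 = f := by
  apply Subtype.val_injective
  change algebraMap S B[X] _ = _
  rw [← eval_one_map, hS.map_coaction, eval_one_gradingCoaction]

theorem mem_of_coeff_coaction_mem (hS : IsGradedSubalgebra S) {J : Ideal S} {f : S}
    (hf : (f : B[X]).coeff 0 = 0) (hJ : ∀ n ≠ 0, (hS.coaction f).coeff n ∈ J) : f ∈ J := by
  rw [← hS.eval_one_coaction f, eval_eq_sum]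
  refine sum_mem fun n _ ↦ J.mul_mem_right _ ?_
  rcases eq_or_ne n 0 with rfl | hn
  · have hzero : (hS.coaction f).coeff 0 = 0 :=
      Subtype.ext (by rw [hS.coe_coeff_coaction, hf, map_zero]; rfl)
    rw [hzero]
    exact J.zero_mem
  · exact hJ n hn

theorem integralClosure {R : Subalgebra A B[X]} (hR : IsGradedSubalgebra R) :
    IsGradedSubalgebra (integralClosure R B[X]) := by
  intro f hf k
  let : Algebra R[X] B[X][X] := Polynomial.algebra R B[X]
  have hcoaction : IsIntegral R[X] (gradingCoaction f) :=
    IsIntegral.map_of_comp_eq hR.coaction gradingCoaction (RingHom.ext hR.map_coaction) hf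
  rw [← coeff_gradingCoaction]
  exact isIntegral_iff_isIntegral_coeff.mp hcoaction k

theorem coeff_coaction_algebraMap {R : Subalgebra A B[X]} (hR : IsGradedSubalgebra R) (r : R)
    (n : ℕ) : (hR.integralClosure.coaction (algebraMap R _ r)).coeff n =
      algebraMap R _ ((hR.coaction r).coeff n) :=
  Subtype.ext <| (coe_coeff_coaction _ _ n).trans (hR.coe_coeff_coaction r n).symm

theorem mem_of_coeff_zero_eq_zero [Algebra.IsIntegral A S] (hS : IsGradedSubalgebra S)
    {q : Ideal S} [q.IsPrime]
    (hq : ∀ a : A, ∀ n ≠ 0, (hS.coaction (algebraMap A S a)).coeff n ∈ q)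
    {x : S} (hx : (x : B[X]).coeff 0 = 0) : x ∈ q := by
  let Φ : S →+* (S ⧸ q)[X] := (mapRingHom (Ideal.Quotient.mk q)).comp hS.coaction
  have hΦ (y : S) (n : ℕ) : (Φ y).coeff n = 0 ↔ (hS.coaction y).coeff n ∈ q := by
    rw [← Ideal.Quotient.eq_zero_iff_mem, RingHom.comp_apply, coe_mapRingHom, coeff_map]
  have hΦA (a : A) : Φ (algebraMap A S a) = C ((Φ (algebraMap A S a)).coeff 0) := by
    ext n
    rw [coeff_C]
    split_ifs with hn
    · rw [hn]
    · exact (hΦ _ n).mpr (hq a n hn)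
  have hΦx : IsIntegral (S ⧸ q) (Φ x) :=
    (Algebra.IsIntegral.isIntegral (R := A) x).map_of_comp_eq
      (constantCoeff.comp (Φ.comp (algebraMap A S))) Φ (RingHom.ext fun a ↦ (hΦA a).symm)
  refine hS.mem_of_coeff_coaction_mem hx fun n hn ↦ (hΦ x n).mp (coeff_eq_zero_of_natDegree_lt ?_)
  rw [natDegree_eq_zero_of_isIntegral hΦx]
  exact Nat.pos_of_ne_zero hn

end IsGradedSubalgebra

end Grading

theorem exists_isPrime_comap_inclusion_eq {R D : Type*} [CommRing R] [CommRing D] [Algebra R D]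
    {S : Subalgebra R D} (hS : S ≤ integralClosure R D) (q : Ideal S) [q.IsPrime] :
    ∃ Q : Ideal (integralClosure R D), Q.IsPrime ∧ Q.comap (Subalgebra.inclusion hS) = q := by
  have hint : (Subalgebra.inclusion hS : S →+* integralClosure R D).IsIntegral :=
    RingHom.IsIntegral.tower_top (algebraMap R S) _
      (algebraMap_isIntegral_iff.mpr inferInstance)
  obtain ⟨Q, hQ⟩ := hint.comap_surjective (Subalgebra.inclusion_injective hS) ⟨q, ‹_›⟩
  exact ⟨Q.asIdeal, Q.isPrime, congrArg PrimeSpectrum.asIdeal hQ⟩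

section Rees

variable {A : Type*} [CommRing A] (I : Ideal A) (C : Type*) [CommRing C] [Algebra A C]

/-- The Rees algebra `A[It]`, as the subalgebra of `C[t]` generated by `It`, for an arbitrary
`A`-algebra `C`. When `A → C` is not injective this is the image of `reesAlgebra I` in `C[t]`. -/
noncomputable def reesOver : Subalgebra A C[X] :=
  Algebra.adjoin A {p : C[X] | ∃ a ∈ I, p = monomial 1 (algebraMap A C a)}

theorem map_mapAlg_reesAlgebra : (reesAlgebra I).map (mapAlg A C) = reesOver I C := by
  rw [← adjoin_monomial_eq_reesAlgebra, AlgHom.map_adjoin, reesOver]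
  congr 1
  ext p
  simp [eq_comm, mapAlg_eq_map]

variable {I C}

theorem monomial_algebraMap_mem_reesOver {n : ℕ} {a : A} (ha : a ∈ I ^ n) :
    monomial n (algebraMap A C a) ∈ reesOver I C := by
  rw [← map_mapAlg_reesAlgebra]
  exact ⟨monomial n a, reesAlgebra.monomial_mem.mpr ha, by simp [mapAlg_eq_map]⟩

theorem exists_mem_pow_algebraMap_eq_coeff {r : C[X]} (hr : r ∈ reesOver I C) (n : ℕ) :
    ∃ a ∈ I ^ n, algebraMap A C a = r.coeff n := by
  rw [← map_mapAlg_reesAlgebra] at hr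
  obtain ⟨g, hg, rfl⟩ := hr
  exact ⟨g.coeff n, hg n, by simp [mapAlg_eq_map]⟩

theorem isGradedSubalgebra_reesOver : IsGradedSubalgebra (reesOver I C) := by
  intro r hr n
  obtain ⟨a, ha, har⟩ := exists_mem_pow_algebraMap_eq_coeff hr n
  rw [← har]
  exact monomial_algebraMap_mem_reesOver ha

theorem mem_of_coe_eq_monomial_algebraMap {J : Ideal (reesOver I C)}
    (hJ : ∀ r : reesOver I C, (∃ a ∈ I, (r : C[X]) = monomial 1 (algebraMap A C a)) → r ∈ J)
    {n : ℕ} (hn : n ≠ 0) {a : A} (ha : a ∈ I ^ n) {r : reesOver I C}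
    (hr : (r : C[X]) = monomial n (algebraMap A C a)) : r ∈ J := by
  obtain ⟨m, rfl⟩ := Nat.exists_eq_succ_of_ne_zero hn
  rw [Nat.succ_eq_add_one, pow_succ] at ha
  induction ha using Submodule.mul_induction_on' generalizing r with
  | mem_mul_mem b hb c hc =>
    have hprod : r = ⟨_, monomial_algebraMap_mem_reesOver hb⟩ *
        ⟨monomial 1 (algebraMap A C c), Algebra.subset_adjoin ⟨c, hc, rfl⟩⟩ :=
      Subtype.ext (by rw [hr, map_mul]; exact (monomial_mul_monomial m 1 _ _).symm)
    rw [hprod]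
    exact J.mul_mem_left _ (hJ _ ⟨c, hc, rfl⟩)
  | add b hb c hc ihb ihc =>
    have hsum : r = ⟨_, monomial_algebraMap_mem_reesOver (pow_succ I m ▸ hb)⟩ +
        ⟨_, monomial_algebraMap_mem_reesOver (pow_succ I m ▸ hc)⟩ :=
      Subtype.ext (by rw [hr, map_add, map_add]; rfl)
    rw [hsum]
    exact J.add_mem (ihb rfl) (ihc rfl)

theorem coeff_coaction_reesOver_mem {J : Ideal (reesOver I C)}
    (hJ : ∀ r : reesOver I C, (∃ a ∈ I, (r : C[X]) = monomial 1 (algebraMap A C a)) → r ∈ J)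
    (r : reesOver I C) {n : ℕ} (hn : n ≠ 0) :
    (isGradedSubalgebra_reesOver.coaction r).coeff n ∈ J := by
  obtain ⟨a, ha, har⟩ := exists_mem_pow_algebraMap_eq_coeff r.2 n
  exact mem_of_coe_eq_monomial_algebraMap hJ hn ha
    (by rw [isGradedSubalgebra_reesOver.coe_coeff_coaction, har])

theorem prime_containing_It_contains_positive_part_general {S : Subalgebra (reesOver I C) C[X]}
    (hS : S ≤ integralClosure (reesOver I C) C[X]) {q : Ideal S} (hq : q.IsPrime)
    (hIq : ∀ x : S, (∃ a ∈ I, (x : C[X]) = monomial 1 (algebraMap A C a)) → x ∈ q)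
    {x : S} (hx : (x : C[X]).coeff 0 = 0) : x ∈ q := by
  obtain ⟨Q, hQ, rfl⟩ := exists_isPrime_comap_inclusion_eq hS q
  refine isGradedSubalgebra_reesOver.integralClosure.mem_of_coeff_zero_eq_zero (q := Q)
    (fun r n hn ↦ ?_) hx
  rw [isGradedSubalgebra_reesOver.coeff_coaction_algebraMap]
  exact coeff_coaction_reesOver_mem (J := Q.comap (algebraMap (reesOver I C) (integralClosure _ _)))
    (fun s hs ↦ hIq (algebraMap (reesOver I C) S s) hs) r hn

end Rees

/-- Lemma 3.1: let `I` be a nonzero proper ideal of a reduced Noetherian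
local ring `(A,m,k)`, `C` the integral closure of `A` in its total quotient ring `K`,
`R = A[It] ⊆ C[t]` the Rees algebra, `T` the integral closure of `R` in `C[t]`, and `S` the
weak normalization of `R` in `T` (characterized by `hS`).  (1) Every prime ideal of `T`
containing `{at : a ∈ I}` contains `T ∩ tC[t]` (the elements of `T` with zero constant
term); (2) likewise for `S`. -/
theorem prime_containing_It_contains_positive_part {A K : Type*} [CommRing A]
    [IsNoetherianRing A] [IsLocalRing A] [IsReduced A]
    [CommRing K] [Algebra A K] [IsFractionRing A K]
    (I : Ideal A) (hI0 : I ≠ ⊥) (hI1 : I ≠ ⊤)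
    (S : Subalgebra ↥(reesIn I K) (Polynomial ↥(integralClosure A K)))
    (hS : ∀ f : Polynomial ↥(integralClosure A K),
      f ∈ S ↔ f ∈ integralClosure ↥(reesIn I K) (Polynomial ↥(integralClosure A K)) ∧
        WSubOver (reesIn I K : Set (Polynomial ↥(integralClosure A K))) f) :
    (∀ q : Ideal ↥(integralClosure ↥(reesIn I K) (Polynomial ↥(integralClosure A K))),
      q.IsPrime →
      (∀ x : ↥(integralClosure ↥(reesIn I K) (Polynomial ↥(integralClosure A K))),
        (∃ a ∈ I, (x : Polynomial ↥(integralClosure A K))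
            = Polynomial.monomial 1 (algebraMap A ↥(integralClosure A K) a)) → x ∈ q) →
      ∀ x : ↥(integralClosure ↥(reesIn I K) (Polynomial ↥(integralClosure A K))),
        (x : Polynomial ↥(integralClosure A K)).coeff 0 = 0 → x ∈ q) ∧
    (∀ q : Ideal ↥S, q.IsPrime →
      (∀ x : ↥S, (∃ a ∈ I, (x : Polynomial ↥(integralClosure A K))
            = Polynomial.monomial 1 (algebraMap A ↥(integralClosure A K) a)) → x ∈ q) →
      ∀ x : ↥S, (x : Polynomial ↥(integralClosure A K)).coeff 0 = 0 → x ∈ q) :=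
  ⟨fun _ hq hIq _ ↦ prime_containing_It_contains_positive_part_general le_rfl hq hIq,
    fun _ hq hIq _ ↦ prime_containing_It_contains_positive_part_general
      (fun f hf ↦ ((hS f).mp hf).1) hq hIq⟩
end

section
/- Let (A,m,k) be a Noetherian local ring whose residue field k is algebraically closed of characteristic 0, let I be an m-primary ideal of A, and let J be a minimal reduction of I. Then J + I_> = *J. -/
open Filter Polynomial

/-- An element `b` is weakly subintegral over an ideal `I`:
there are `q ≥ 0` and `a_i ∈ I^i` with
`b^n + ∑_{i=1}^n (n choose i) a_i b^{n-i} = 0` for `q+1 ≤ n ≤ 2q+1`.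
The set of such elements is the weak subintegral closure `*I`. -/
def WSubIdeal {A : Type*} [CommRing A] (I : Ideal A) (b : A) : Prop :=
  ∃ q : ℕ, ∃ a : ℕ → A, (∀ i, a i ∈ I ^ i) ∧
    ∀ n, q + 1 ≤ n → n ≤ 2 * q + 1 →
      b ^ n + ∑ i ∈ Finset.Icc 1 n, (n.choose i : A) * a i * b ^ (n - i) = 0

/-- `a` is integral over the ideal `I`: `a^n + c_1 a^{n-1} + ⋯ + c_n = 0` with `c_i ∈ I^i`.
The set of such elements is the integral closure `Ī` of `I`. -/
def IntegralOverIdeal {A : Type*} [CommRing A] (I : Ideal A) (a : A) : Prop :=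
  ∃ n : ℕ, 0 < n ∧ ∃ c : ℕ → A, (∀ i, c i ∈ I ^ i) ∧
    a ^ n + ∑ i ∈ Finset.Icc 1 n, c i * a ^ (n - i) = 0

/-- `J` is a reduction of `I`: `J ⊆ I` and `J̄ = Ī`. -/
def IsReduction {A : Type*} [CommRing A] (J I : Ideal A) : Prop :=
  J ≤ I ∧ ∀ x, IntegralOverIdeal J x ↔ IntegralOverIdeal I x

/-- `J` is a minimal reduction of `I`. -/
def IsMinimalReduction {A : Type*} [CommRing A] (J I : Ideal A) : Prop :=
  IsReduction J I ∧ ∀ J' : Ideal A, IsReduction J' I → J' ≤ J → J' = J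

/-- `ord_I(a) = max {n | a ∈ I^n}` (with value `∞` if `a ∈ ⋂ I^n`). -/
noncomputable def ordI {A : Type*} [CommRing A] (I : Ideal A) (a : A) : ℕ∞ :=
  ⨆ (n : ℕ) (_ : a ∈ I ^ n), (n : ℕ∞)

/-- The sequence `ord_I(a^n)/n`, whose limit is the asymptotic Samuel function `v̄_I(a)`. -/
noncomputable def samuelSeq {A : Type*} [CommRing A] (I : Ideal A) (a : A) (n : ℕ) : ENNReal :=
  (ordI I (a ^ n) : ENNReal) / (n : ENNReal)

/-- `a ∈ I_>`, i.e. `v̄_I(a) > 1`, where `v̄_I(a)` is the limit of `ord_I(a^n)/n`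
(this limit always exists in `[0,∞]`). -/
def MemIgt {A : Type*} [CommRing A] (I : Ideal A) (a : A) : Prop :=
  ∃ L : ENNReal, 1 < L ∧ Filter.Tendsto (samuelSeq I a) Filter.atTop (nhds L)

/-!
Write `P_n = X ^ n + ∑ (n choose i) a_i X ^ (n - i)`, so that weak subintegrality of `b` over `J`
asks for `b` to be a common root of `P_(q+1), …, P_(2q+1)`; these polynomials form an Appell
sequence, `P_n' = n P_(n-1)`.

For `J + I_> ⊆ *J`, let `b = j + k` with `j ∈ J` and `k ∈ I_>`, so that `k ^ n ∈ J ^ n` for `n > q`.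
Let `Λ` be the linear functional with `Λ (X ^ n) = k ^ n` for `n ≤ q` and `Λ (X ^ n) = 0` beyond.
Then `a_i = Λ ((X - b) ^ i)` works: `Λ ((X - k) ^ i)` vanishes for `0 < i ≤ q` and lies in `J ^ i`
for `i > q`.

For `*J ⊆ J + I_>`, a minimal reduction has analytically independent generators, and `J + (b)` is
integral over `J`, so the polynomial ring `S` over the residue field on these generators embeds
into the fiber ring of `J + (b)`. There the degree one class of `b` is a common root of
`P_(q+1), …, P_(2q+1)`, with coefficients in `S`. In a domain of characteristic zero a common root
is unique: it is a root of `P_(2q+1)` of multiplicity more than `q`. Hence, `S` being integrally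
closed, the root lies in `S` modulo a prime contracting to zero, uniqueness modulo every prime shows
that `b` agrees with it up to a nilpotent, and uniqueness under `X_i ↦ T X_i` makes it a linear
form. Lifting this form to `j ∈ J` gives `(b - j) ^ N ∈ m (J + (b)) ^ N` for some `N`, whence
`b - j ∈ I_>`.
-/

theorem sum_range_succ_eq_add_sum_Icc {M : Type*} [AddCommMonoid M] (f : ℕ → M) (n : ℕ) :
    ∑ i ∈ Finset.range (n + 1), f i = f 0 + ∑ i ∈ Finset.Icc 1 n, f i := by
  rw [Finset.sum_range_eq_add_Ico f n.succ_pos, Nat.succ_eq_add_one,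
    Finset.Ico_add_one_right_eq_Icc]

section Reductions

variable {A : Type*} [CommRing A] {I J L : Ideal A} {x : A}

theorem IntegralOverIdeal.mono (h : J ≤ I) (hx : IntegralOverIdeal J x) :
    IntegralOverIdeal I x := by
  obtain ⟨n, hn, c, hc, hsum⟩ := hx
  exact ⟨n, hn, c, fun i => Ideal.pow_right_mono h i (hc i), hsum⟩

theorem IntegralOverIdeal.of_mem (hx : x ∈ J) : IntegralOverIdeal J x := by
  refine ⟨1, one_pos, Pi.single 1 (-x), fun i => ?_, by simp⟩
  obtain rfl | hi := eq_or_ne i 1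
  · simpa using hx
  · simp [hi]

theorem IntegralOverIdeal.mem_radical (hx : IntegralOverIdeal J x) : x ∈ J.radical := by
  obtain ⟨n, -, c, hc, hsum⟩ := hx
  refine ⟨n, ?_⟩
  rw [eq_neg_of_add_eq_zero_left hsum]
  refine neg_mem (sum_mem fun i hi => Ideal.mul_mem_right _ _ ?_)
  exact Ideal.pow_le_self (Nat.one_le_iff_ne_zero.mp (Finset.mem_Icc.mp hi).1) (hc i)

theorem IsReduction.radical_eq (h : IsReduction J I) : J.radical = I.radical :=
  le_antisymm (Ideal.radical_mono h.1) <| Ideal.radical_le_radical_iff.mpr fun x hx =>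
    ((h.2 x).mpr (.of_mem hx)).mem_radical

theorem ideal_sup_pow_succ_le (J K : Ideal A) (n : ℕ) :
    (J ⊔ K) ^ (n + 1) ≤ J * (J ⊔ K) ^ n ⊔ K ^ (n + 1) := by
  induction n with
  | zero => simp
  | succ n ih =>
    calc (J ⊔ K) ^ (n + 1 + 1)
        = J * (J ⊔ K) ^ (n + 1) ⊔ K * (J ⊔ K) ^ (n + 1) := by rw [pow_succ', Ideal.sup_mul]
      _ ≤ J * (J ⊔ K) ^ (n + 1) ⊔ K * (J * (J ⊔ K) ^ n ⊔ K ^ (n + 1)) :=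
        sup_le_sup_left (Ideal.mul_mono_right ih) _
      _ = J * (J ⊔ K) ^ (n + 1) ⊔ (J * (K * (J ⊔ K) ^ n) ⊔ K ^ (n + 1 + 1)) := by
        rw [Ideal.mul_sup, mul_left_comm, ← pow_succ']
      _ ≤ J * (J ⊔ K) ^ (n + 1) ⊔ K ^ (n + 1 + 1) := by
        refine sup_le le_sup_left (sup_le_sup_right (Ideal.mul_mono_right ?_) _)
        rw [pow_succ']
        exact Ideal.mul_mono_left le_sup_right

theorem pow_add_le_of_pow_succ_le {c : ℕ} (h : L ^ (c + 1) ≤ J * L ^ c) (N : ℕ) :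
    L ^ (N + c) ≤ J ^ N * L ^ c := by
  induction N with
  | zero => simp
  | succ N ih =>
    calc L ^ (N + 1 + c) = L * L ^ (N + c) := by ring
      _ ≤ L * (J ^ N * L ^ c) := Ideal.mul_mono_right ih
      _ = J ^ N * L ^ (c + 1) := by ring
      _ ≤ J ^ N * (J * L ^ c) := Ideal.mul_mono_right h
      _ = J ^ (N + 1) * L ^ c := by ring

theorem IntegralOverIdeal.exists_sup_pow_succ_le (hx : IntegralOverIdeal J x) :
    ∃ c, (J ⊔ Ideal.span {x}) ^ (c + 1) ≤ J * (J ⊔ Ideal.span {x}) ^ c := by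
  obtain ⟨n, hn, c, hc, hsum⟩ := hx
  obtain ⟨n, rfl⟩ := Nat.exists_eq_succ_of_ne_zero hn.ne'
  refine ⟨n, (ideal_sup_pow_succ_le _ _ _).trans (sup_le le_rfl ?_)⟩
  rw [Ideal.span_singleton_pow, Ideal.span_singleton_le_iff_mem, eq_neg_of_add_eq_zero_left hsum]
  refine neg_mem (sum_mem fun i hi => ?_)
  obtain ⟨i, rfl⟩ := Nat.exists_eq_add_of_le' (Finset.mem_Icc.mp hi).1
  obtain ⟨m, rfl⟩ := Nat.exists_eq_add_of_le (Nat.succ_le_succ_iff.mp (Finset.mem_Icc.mp hi).2)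
  have hmem : c (i + 1) * x ^ m ∈ J ^ (i + 1) * (J ⊔ Ideal.span {x}) ^ m :=
    Ideal.mul_mem_mul (hc _)
      (Ideal.pow_mem_pow (Ideal.mem_sup_right (Ideal.mem_span_singleton_self x)) _)
  rw [show i + m + 1 - (i + 1) = m by omega]
  refine SetLike.le_def.mp ?_ hmem
  rw [pow_succ', mul_assoc, pow_add]
  gcongr
  exact le_sup_left

theorem IntegralOverIdeal.exists_sup_pow_add_le (hx : IntegralOverIdeal J x) :
    ∃ c, ∀ N, (J ⊔ Ideal.span {x}) ^ (N + c) ≤ J ^ N := by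
  obtain ⟨c, hc⟩ := hx.exists_sup_pow_succ_le
  exact ⟨c, fun N => (pow_add_le_of_pow_succ_le hc N).trans Ideal.mul_le_left⟩

theorem exists_sup_span_finset_pow_add_le (s : Finset A) (hs : ∀ y ∈ s, IntegralOverIdeal J y) :
    ∃ c, ∀ N, (J ⊔ Ideal.span (s : Set A)) ^ (N + c) ≤ J ^ N := by
  classical
  induction s using Finset.induction_on with
  | empty => exact ⟨0, by simp⟩
  | insert y s _ ih =>
    obtain ⟨c, hc⟩ := ih fun z hz => hs z (Finset.mem_insert_of_mem hz)
    obtain ⟨d, hd⟩ := ((hs y (Finset.mem_insert_self y s)).mono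
      (le_sup_left (b := Ideal.span (s : Set A)))).exists_sup_pow_add_le
    refine ⟨c + d, fun N => ?_⟩
    rw [Finset.coe_insert, Ideal.span_insert, sup_comm (Ideal.span {y}), ← sup_assoc, ← add_assoc]
    exact (hd _).trans (hc N)

theorem exists_pow_add_le_of_forall_integralOverIdeal (hI : I.FG)
    (h : ∀ y ∈ I, IntegralOverIdeal J y) : ∃ c, ∀ N, I ^ (N + c) ≤ J ^ N := by
  obtain ⟨s, rfl⟩ := hI
  obtain ⟨c, hc⟩ := exists_sup_span_finset_pow_add_le s fun y hy => h y (Ideal.subset_span hy)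
  exact ⟨c, fun N => (Ideal.pow_right_mono le_sup_right _).trans (hc N)⟩

theorem IsReduction.exists_pow_add_le (h : IsReduction J I) (hI : I.FG) :
    ∃ c, ∀ N, I ^ (N + c) ≤ J ^ N :=
  exists_pow_add_le_of_forall_integralOverIdeal hI fun y hy => (h.2 y).mpr (.of_mem hy)

theorem IntegralOverIdeal.of_monic {p : A[X]} (hp : p.Monic) (hdeg : 0 < p.natDegree)
    (hcoeff : ∀ k, p.coeff k ∈ J ^ (p.natDegree - k)) (hx : p.eval x = 0) :
    IntegralOverIdeal J x := by
  let c (i : ℕ) : A := if i ≤ p.natDegree then p.coeff (p.natDegree - i) else 0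
  refine ⟨p.natDegree, hdeg, c, fun i => ?_, ?_⟩
  · by_cases hi : i ≤ p.natDegree
    · simpa [c, hi, Nat.sub_sub_self hi] using hcoeff (p.natDegree - i)
    · simp [c, hi]
  · rw [eval_eq_sum_range, ← Finset.sum_flip, sum_range_succ_eq_add_sum_Icc, Nat.sub_zero,
      hp.coeff_natDegree, one_mul] at hx
    rw [← hx]
    congr 1
    refine Finset.sum_congr rfl fun i hi => ?_
    rw [show c i = _ from if_pos (Finset.mem_Icc.mp hi).2]

theorem exists_monic_eval_mul_eq_zero (hL : L.FG) (h : ∀ y ∈ L, x * y ∈ J * L) :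
    ∃ p : A[X], p.Monic ∧ (∀ k, p.coeff k ∈ J ^ (p.natDegree - k)) ∧ ∀ y ∈ L, p.eval x * y = 0 := by
  have : Module.Finite A L := Module.Finite.iff_fg.mpr hL
  have hrange : LinearMap.range (algebraMap A (Module.End A L) x) ≤ J • (⊤ : Submodule A L) := by
    rintro _ ⟨y, rfl⟩
    rw [Submodule.mem_smul_top_iff]
    exact h y y.2
  obtain ⟨p, hp, -, hcoeff, hpx⟩ :=
    LinearMap.exists_monic_and_natDegree_eq_and_coeff_mem_pow_and_aeval_eq_zero A _ J hrange
  refine ⟨p, hp, hcoeff, fun y hy => ?_⟩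
  rw [aeval_algebraMap_apply] at hpx
  simpa using congrArg Subtype.val (LinearMap.congr_fun hpx ⟨y, hy⟩)

theorem IntegralOverIdeal.of_pow_succ_le (hJ : J.FG) {n : ℕ} (h : J ^ (n + 1) ≤ L * J ^ n)
    (hx : IntegralOverIdeal J x) : IntegralOverIdeal L x := by
  cases subsingleton_or_nontrivial A
  · exact .of_mem (Subsingleton.elim 0 x ▸ zero_mem L)
  obtain ⟨c, hc⟩ := hx.exists_sup_pow_succ_le
  set M := J ⊔ Ideal.span {x}
  have hxM : x ∈ M := Ideal.mem_sup_right (Ideal.mem_span_singleton_self x)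
  have hM : M ^ (n + c + 1) ≤ L * M ^ (n + c) := by
    calc M ^ (n + c + 1) = M ^ (n + 1 + c) := by ring
      _ ≤ J ^ (n + 1) * M ^ c := pow_add_le_of_pow_succ_le hc _
      _ ≤ L * J ^ n * M ^ c := Ideal.mul_mono_left h
      _ ≤ L * M ^ n * M ^ c :=
        Ideal.mul_mono_left (Ideal.mul_mono_right (Ideal.pow_right_mono le_sup_left n))
      _ = L * M ^ (n + c) := by ring
  have hfg : (M ^ (n + c)).FG :=
    Ideal.FG.pow (Submodule.FG.sup hJ (Submodule.fg_span_singleton x))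
  obtain ⟨p, hp, hcoeff, hpx⟩ := exists_monic_eval_mul_eq_zero hfg fun y hy =>
    hM (pow_succ' M (n + c) ▸ Ideal.mul_mem_mul hxM hy)
  have hdeg : (p * X ^ (n + c + 1)).natDegree = p.natDegree + (n + c + 1) := by
    rw [hp.natDegree_mul (monic_X_pow _), natDegree_X_pow]
  refine .of_monic (p := p * X ^ (n + c + 1)) (hp.mul (monic_X_pow _)) (by omega) (fun k => ?_) ?_
  · rw [hdeg, coeff_mul_X_pow']
    split_ifs with hk
    · convert hcoeff (k - (n + c + 1)) using 2
      omega
    · exact zero_mem _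
  · rw [eval_mul, eval_X_pow, pow_succ, ← mul_assoc, hpx _ (Ideal.pow_mem_pow hxM _), zero_mul]

theorem IsReduction.of_pow_succ_le (h : IsReduction J I) (hJ : J.FG) (hLJ : L ≤ J) {n : ℕ}
    (hn : J ^ (n + 1) ≤ L * J ^ n) : IsReduction L I :=
  ⟨hLJ.trans h.1, fun y => ⟨fun hy => (h.2 y).mp (hy.mono hLJ), fun hy =>
    ((h.2 y).mpr hy).of_pow_succ_le hJ hn⟩⟩

theorem IsMinimalReduction.eq_of_pow_succ_le (h : IsMinimalReduction J I) (hJ : J.FG) (hLJ : L ≤ J)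
    {n : ℕ} (hn : J ^ (n + 1) ≤ L * J ^ n) : L = J :=
  h.2 L (h.1.of_pow_succ_le hJ hLJ hn) hLJ

theorem pow_mul_pow_le_pow_succ {𝔞 : Ideal A} {c e : ℕ} (hL : ∀ N, L ^ (N + c) ≤ J ^ N)
    (he : 𝔞 ^ e ≤ L) (n : ℕ) :
    (𝔞 * L ^ n) ^ (e * (c + 1)) ≤ J ^ (n * (e * (c + 1)) + 1) := by
  calc (𝔞 * L ^ n) ^ (e * (c + 1)) = (𝔞 ^ e) ^ (c + 1) * L ^ (n * (e * (c + 1))) := by ring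
    _ ≤ L ^ (c + 1) * L ^ (n * (e * (c + 1))) := Ideal.mul_mono_left (Ideal.pow_right_mono he _)
    _ = L ^ (n * (e * (c + 1)) + 1 + c) := by ring
    _ ≤ J ^ (n * (e * (c + 1)) + 1) := hL _

end Reductions

section SamuelFunction

variable {A : Type*} [CommRing A] {I : Ideal A} {a : A}

theorem lt_samuelSeq_iff {b : NNReal} {n : ℕ} (hn : 0 < n) :
    (b : ENNReal) < samuelSeq I a n ↔ ∃ p : ℕ, a ^ n ∈ I ^ p ∧ b * n < p := by
  rw [samuelSeq, ENNReal.lt_div_iff_mul_lt (by simp [hn.ne']) (by simp), ordI]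
  simp only [ENat.toENNReal_iSup, lt_iSup_iff, ENat.toENNReal_coe, exists_prop]
  norm_cast

theorem pow_mem_pow_mul_div {m p : ℕ} (h : a ^ m ∈ I ^ p) (n : ℕ) : a ^ n ∈ I ^ (p * (n / m)) := by
  refine Ideal.mem_of_dvd _ (pow_dvd_pow a (Nat.mul_div_le n m)) ?_
  rw [pow_mul, pow_mul]
  exact Ideal.pow_mem_pow h _

theorem eventually_mul_lt_mul_div {b : NNReal} {m p : ℕ} (hm : 0 < m) (h : b * m < p) :
    ∀ᶠ n : ℕ in atTop, b * n < (p * (n / m) : ℕ) := by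
  have hpos : 0 < (p : ℝ) - b * m := sub_pos.mpr (by exact_mod_cast h)
  filter_upwards [(tendsto_natCast_atTop_atTop.comp
    (Nat.tendsto_div_const_atTop hm.ne')).eventually_gt_atTop (b * m / (p - b * m) : ℝ)] with n hn
  have hdiv : (n : ℝ) ≤ m * (n / m : ℕ) + m := by
    exact_mod_cast (Nat.lt_mul_div_succ n hm).le
  have hb : (b : ℝ) * n ≤ b * (m * (n / m : ℕ) + m) := by gcongr
  rw [Function.comp_apply, div_lt_iff₀ hpos] at hn
  rw [← NNReal.coe_lt_coe]
  push_cast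
  linarith

theorem tendsto_samuelSeq (I : Ideal A) (a : A) :
    Tendsto (samuelSeq I a) atTop (nhds (⨆ n : ℕ, ⨆ _ : 0 < n, samuelSeq I a n)) := by
  refine tendsto_order.mpr ⟨fun b hb => ?_, fun b hb => ?_⟩
  · simp only [lt_iSup_iff] at hb
    obtain ⟨m, hm, hbm⟩ := hb
    lift b to NNReal using hbm.ne_top
    obtain ⟨p, hp, hbp⟩ := (lt_samuelSeq_iff hm).mp hbm
    filter_upwards [eventually_mul_lt_mul_div hm hbp, eventually_gt_atTop 0] with n hbn hn
    exact (lt_samuelSeq_iff hn).mpr ⟨_, pow_mem_pow_mul_div hp n, hbn⟩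
  · filter_upwards [eventually_gt_atTop 0] with n hn
    exact (le_iSup₂ (f := fun (n : ℕ) (_ : 0 < n) => samuelSeq I a n) n hn).trans_lt hb

theorem memIgt_iff_exists_one_lt_samuelSeq : MemIgt I a ↔ ∃ n, 0 < n ∧ 1 < samuelSeq I a n := by
  have : MemIgt I a ↔ 1 < ⨆ n : ℕ, ⨆ _ : 0 < n, samuelSeq I a n :=
    ⟨fun ⟨_, hL, h⟩ => tendsto_nhds_unique (tendsto_samuelSeq I a) h ▸ hL,
      fun h => ⟨_, h, tendsto_samuelSeq I a⟩⟩
  simp only [this, lt_iSup_iff, exists_prop]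

theorem memIgt_iff_exists_pow_mem : MemIgt I a ↔ ∃ n, 0 < n ∧ a ^ n ∈ I ^ (n + 1) := by
  rw [memIgt_iff_exists_one_lt_samuelSeq]
  refine exists_congr fun n => and_congr_right fun hn => ?_
  rw [← ENNReal.coe_one, lt_samuelSeq_iff hn]
  simp only [one_mul, Nat.cast_lt]
  exact ⟨fun ⟨p, hp, hnp⟩ => Ideal.pow_le_pow_right hnp hp, fun h => ⟨n + 1, h, n.lt_succ_self⟩⟩

theorem MemIgt.eventually_pow_mem (h : MemIgt I a) (c : ℕ) :
    ∀ᶠ n in atTop, a ^ n ∈ I ^ (n + c) := by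
  obtain ⟨m, hm, ham⟩ := memIgt_iff_exists_pow_mem.mp h
  filter_upwards [eventually_ge_atTop (m * (m + c))] with n hn
  refine Ideal.pow_le_pow_right ?_ (pow_mem_pow_mul_div ham n)
  have hdiv : m + c ≤ n / m := (Nat.le_div_iff_mul_le hm).mpr (by rwa [mul_comm])
  have hmod : n < m * (n / m) + m := Nat.lt_mul_div_succ n hm
  linarith

theorem MemIgt.of_pow_mem {n : ℕ} (h : a ^ n ∈ I ^ (n + 1)) : MemIgt I a := by
  obtain rfl | hn := n.eq_zero_or_pos
  · have hI : I = ⊤ := by simpa [Ideal.eq_top_iff_one] using h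
    exact memIgt_iff_exists_pow_mem.mpr ⟨1, one_pos, by simp [hI, Ideal.top_pow]⟩
  · exact memIgt_iff_exists_pow_mem.mpr ⟨n, hn, h⟩

theorem MemIgt.mono {J : Ideal A} (h : J ≤ I) (ha : MemIgt J a) : MemIgt I a := by
  obtain ⟨n, hn, han⟩ := memIgt_iff_exists_pow_mem.mp ha
  exact memIgt_iff_exists_pow_mem.mpr ⟨n, hn, Ideal.pow_right_mono h _ han⟩

end SamuelFunction

section AppellPolynomials

variable {D E : Type*} [CommRing D] [CommRing E]

/-- The `n`-th Appell polynomial `X ^ n + ∑ i ∈ [1, n], (n choose i) * a i * X ^ (n - i)` of the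
sequence `a`, normalized by `a 0 = 1` whatever the actual value of `a 0`. -/
noncomputable def appellPolynomial (a : ℕ → D) (n : ℕ) : D[X] :=
  X ^ n + ∑ i ∈ Finset.Icc 1 n, C (n.choose i * a i) * X ^ (n - i)

theorem eval_appellPolynomial (a : ℕ → D) (n : ℕ) (b : D) :
    (appellPolynomial a n).eval b =
      b ^ n + ∑ i ∈ Finset.Icc 1 n, (n.choose i : D) * a i * b ^ (n - i) := by
  simp [appellPolynomial, eval_finsetSum]

theorem map_appellPolynomial (φ : D →+* E) (a : ℕ → D) (n : ℕ) :
    (appellPolynomial a n).map φ = appellPolynomial (fun i => φ (a i)) n := by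
  simp [appellPolynomial, Polynomial.map_sum]

theorem eval_appellPolynomial_map (φ : D →+* E) (a : ℕ → D) (n : ℕ) (b : D) :
    (appellPolynomial (fun i => φ (a i)) n).eval (φ b) = φ ((appellPolynomial a n).eval b) := by
  rw [← map_appellPolynomial, eval_map_apply]

theorem eval_appellPolynomial_mul (a : ℕ → D) (n : ℕ) (t b : D) :
    (appellPolynomial (fun i => t ^ i * a i) n).eval (t * b) =
      t ^ n * (appellPolynomial a n).eval b := by
  rw [eval_appellPolynomial, eval_appellPolynomial, mul_add, Finset.mul_sum, mul_pow]
  congr 1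
  refine Finset.sum_congr rfl fun i hi => ?_
  rw [← pow_mul_pow_sub t (Finset.mem_Icc.mp hi).2, mul_pow]
  ring

theorem degree_sum_choose_mul_X_pow_lt (a : ℕ → D) (n : ℕ) :
    (∑ i ∈ Finset.Icc 1 n, C ((n.choose i : D) * a i) * X ^ (n - i)).degree <
      (n : WithBot ℕ) := by
  refine (degree_sum_le _ _).trans_lt ((Finset.sup_lt_iff (WithBot.bot_lt_coe n)).mpr ?_)
  intro i hi
  refine (degree_C_mul_X_pow_le _ _).trans_lt (Nat.cast_lt.mpr ?_)
  have := Finset.mem_Icc.mp hi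
  omega

theorem monic_appellPolynomial (a : ℕ → D) (n : ℕ) : (appellPolynomial a n).Monic :=
  monic_X_pow_add (degree_sum_choose_mul_X_pow_lt a n)

theorem natDegree_appellPolynomial_le (a : ℕ → D) (n : ℕ) : (appellPolynomial a n).natDegree ≤ n :=
  natDegree_le_of_degree_le <| (degree_add_le _ _).trans <|
    max_le (degree_X_pow_le n) (degree_sum_choose_mul_X_pow_lt a n).le

theorem derivative_appellPolynomial (a : ℕ → D) (n : ℕ) :
    derivative (appellPolynomial a (n + 1)) = C (n + 1 : D) * appellPolynomial a n := by
  have hterm : ∀ i ∈ Finset.Icc 1 n,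
      derivative (C ((n + 1).choose i * a i) * X ^ (n + 1 - i)) =
        C (n + 1 : D) * (C (n.choose i * a i) * X ^ (n - i)) := by
    intro i hi
    have hsub : n + 1 - i = n - i + 1 := Nat.sub_add_comm (Finset.mem_Icc.mp hi).2
    have hchoose : (n.choose i * (n + 1) : D) = (n + 1).choose i * ((n - i : ℕ) + 1) := by
      exact_mod_cast congrArg (Nat.cast : ℕ → D) (hsub ▸ Nat.choose_mul_succ_eq n i)
    rw [derivative_C_mul_X_pow, hsub, Nat.add_sub_cancel, ← mul_assoc, ← C_mul]
    congr 2
    push_cast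
    linear_combination -a i * hchoose
  rw [appellPolynomial, appellPolynomial, derivative_add, derivative_X_pow, derivative_sum,
    Finset.sum_Icc_succ_top (by omega), Finset.sum_congr rfl hterm, mul_add, Finset.mul_sum]
  simp

theorem iterate_derivative_appellPolynomial (a : ℕ → D) (j n : ℕ) :
    ∃ c : D, derivative^[j] (appellPolynomial a (n + j)) = C c * appellPolynomial a n := by
  induction j with
  | zero => exact ⟨1, by simp⟩
  | succ j ih =>
    obtain ⟨c, hc⟩ := ih
    refine ⟨((n + j : ℕ) + 1) * c, ?_⟩
    rw [Function.iterate_succ_apply, ← add_assoc, derivative_appellPolynomial,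
      iterate_derivative_C_mul, hc, C_mul, mul_assoc]

/-- The system of equations in the definition of weak subintegrality: `b` is a common root of the
Appell polynomials of `a` of degrees `q + 1, …, 2 * q + 1`. -/
def IsAppellRoot (a : ℕ → D) (q : ℕ) (b : D) : Prop :=
  ∀ n ∈ Set.Icc (q + 1) (2 * q + 1), (appellPolynomial a n).eval b = 0

theorem wSubIdeal_iff_exists_isAppellRoot {J : Ideal D} {b : D} :
    WSubIdeal J b ↔ ∃ (q : ℕ) (a : ℕ → D), (∀ i, a i ∈ J ^ i) ∧ IsAppellRoot a q b := by
  simp only [WSubIdeal, IsAppellRoot, Set.mem_Icc, and_imp, eval_appellPolynomial]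

theorem WSubIdeal.integralOverIdeal {J : Ideal D} {b : D} (h : WSubIdeal J b) :
    IntegralOverIdeal J b := by
  obtain ⟨q, a, ha, h⟩ := h
  exact ⟨q + 1, q.succ_pos, fun i => (q + 1).choose i * a i,
    fun i => Ideal.mul_mem_left _ _ (ha i), h (q + 1) le_rfl (by omega)⟩

namespace IsAppellRoot

variable {a : ℕ → D} {q : ℕ} {b : D}

theorem map (φ : D →+* E) (h : IsAppellRoot a q b) :
    IsAppellRoot (fun i => φ (a i)) q (φ b) := fun n hn => by
  rw [eval_appellPolynomial_map, h n hn, map_zero]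

theorem of_map {φ : D →+* E} (hφ : Function.Injective φ)
    (h : IsAppellRoot (fun i => φ (a i)) q (φ b)) : IsAppellRoot a q b := fun n hn => hφ <| by
  rw [← eval_appellPolynomial_map, h n hn, map_zero]

theorem mul_left (t : D) (h : IsAppellRoot a q b) :
    IsAppellRoot (fun i => t ^ i * a i) q (t * b) := fun n hn => by
  rw [eval_appellPolynomial_mul, h n hn, mul_zero]

theorem eval_minimal (h : IsAppellRoot a q b) : (appellPolynomial a (q + 1)).eval b = 0 :=
  h (q + 1) ⟨le_rfl, by omega⟩

theorem lt_rootMultiplicity [NoZeroDivisors D] [CharZero D] (h : IsAppellRoot a q b) :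
    q < (appellPolynomial a (2 * q + 1)).rootMultiplicity b := by
  refine (lt_rootMultiplicity_iff_isRoot_iterate_derivative
    (monic_appellPolynomial a _).ne_zero).mpr fun j hj => ?_
  obtain ⟨c, hc⟩ := iterate_derivative_appellPolynomial a j (2 * q + 1 - j)
  rw [Nat.sub_add_cancel (by omega)] at hc
  rw [hc, IsRoot, eval_mul, h _ ⟨by omega, by omega⟩, mul_zero]

-- Two distinct common roots, each of multiplicity at least `q + 1`, would exceed the degree
-- `2 * q + 1`.
theorem unique [IsDomain D] [CharZero D] {c : D} (hb : IsAppellRoot a q b)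
    (hc : IsAppellRoot a q c) : b = c := by
  classical
  by_contra hne
  have hle : Multiset.replicate (q + 1) b + Multiset.replicate (q + 1) c ≤
      (appellPolynomial a (2 * q + 1)).roots := by
    refine Multiset.le_iff_count.mpr fun z => ?_
    rw [Multiset.count_add, Multiset.count_replicate, Multiset.count_replicate, count_roots]
    split_ifs with hbz hcz hcz
    · exact absurd (hbz.trans hcz.symm) hne
    · exact hbz ▸ hb.lt_rootMultiplicity
    · exact (zero_add (q + 1)).symm ▸ hcz ▸ hc.lt_rootMultiplicity
    · exact Nat.zero_le _
  have hcard := (Multiset.card_le_card hle).trans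
    ((card_roots' _).trans (natDegree_appellPolynomial_le a _))
  rw [Multiset.card_add, Multiset.card_replicate, Multiset.card_replicate] at hcard
  omega

theorem mem_range_of_field {K F : Type*} [Field K] [Field F] [Algebra K F] [CharZero K]
    {a : ℕ → K} {b : F} (hb : IsAppellRoot (fun i => algebraMap K F (a i)) q b) :
    b ∈ (algebraMap K F).range := by
  let Ω := AlgebraicClosure F
  have : CharZero Ω := charZero_of_injective_algebraMap (algebraMap K Ω).injective
  have haeval : ∀ n ∈ Set.Icc (q + 1) (2 * q + 1), aeval b (appellPolynomial a n) = 0 :=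
    fun n hn => by rw [← eval_map_algebraMap, map_appellPolynomial, hb n hn]
  have hint : IsIntegral K b :=
    ⟨appellPolynomial a (q + 1), monic_appellPolynomial a _, haeval _ ⟨le_rfl, by omega⟩⟩
  have hroot : ∀ z ∈ (minpoly K b).rootSet Ω,
      IsAppellRoot (fun i => algebraMap K Ω (a i)) q z := by
    intro z hz n hn
    obtain ⟨r, hr⟩ := minpoly.dvd K b (haeval n hn)
    rw [← map_appellPolynomial, eval_map_algebraMap, hr, map_mul,
      aeval_eq_zero_of_mem_rootSet hz, zero_mul]
  have hcard : Fintype.card ((minpoly K b).rootSet Ω) = (minpoly K b).natDegree :=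
    card_rootSet_eq_natDegree (minpoly.irreducible hint).separable (IsAlgClosed.splits _)
  have hle : Fintype.card ((minpoly K b).rootSet Ω) ≤ 1 :=
    Fintype.card_le_one_iff.mpr fun y z => Subtype.ext ((hroot y y.2).unique (hroot z z.2))
  exact minpoly.natDegree_eq_one_iff.mp (le_antisymm (hcard ▸ hle) (minpoly.natDegree_pos hint))

theorem mem_range {S F : Type*} [CommRing S] [IsDomain S] [IsIntegrallyClosed S] [CharZero S]
    [Field F] {φ : S →+* F} (hφ : Function.Injective φ) {a : ℕ → S} {b : F}
    (hb : IsAppellRoot (fun i => φ (a i)) q b) : b ∈ φ.range := by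
  algebraize [φ]
  have : FaithfulSMul S F := (faithfulSMul_iff_algebraMap_injective S F).mpr hφ
  let := FractionRing.liftAlgebra S F
  have : CharZero (FractionRing S) :=
    charZero_of_injective_algebraMap (IsFractionRing.injective S (FractionRing S))
  have hint : IsIntegral S b := by
    refine ⟨appellPolynomial a (q + 1), monic_appellPolynomial a _, ?_⟩
    rw [← eval_map, RingHom.algebraMap_toAlgebra, map_appellPolynomial, hb.eval_minimal]
  obtain ⟨t, rfl⟩ : b ∈ (algebraMap (FractionRing S) F).range := by
    refine mem_range_of_field (a := fun i => algebraMap S (FractionRing S) (a i)) (q := q) ?_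
    simp only [← IsScalarTower.algebraMap_apply]
    exact hb
  obtain ⟨s, rfl⟩ := IsIntegrallyClosed.isIntegral_iff.mp
    ((isIntegral_algebraMap_iff (algebraMap (FractionRing S) F).injective).mp hint)
  exact ⟨s, IsScalarTower.algebraMap_apply S (FractionRing S) F s⟩

-- Modulo every prime, `b` and `θ γ` solve the same system over a field of characteristic zero.
theorem exists_isNilpotent_sub {S : Type*} [CommRing S] [IsDomain S] [IsIntegrallyClosed S]
    [Algebra ℚ S] {θ : S →+* D} (hθ : Function.Injective θ) {a : ℕ → S}
    (hb : IsAppellRoot (fun i => θ (a i)) q b) :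
    ∃ γ, IsAppellRoot a q γ ∧ IsNilpotent (b - θ γ) := by
  have : CharZero S := algebraRat.charZero S
  obtain ⟨P, hP, hPθ⟩ := Ideal.exists_comap_eq_of_mem_minimalPrimes_of_injective hθ ⊥
    (by simp [IsDomain.minimalPrimes_eq_singleton_bot])
  have hinj : Function.Injective ((algebraMap D P.ResidueField).comp θ) := by
    refine (injective_iff_map_eq_zero _).mpr fun s hs => ?_
    rw [RingHom.comp_apply, Ideal.algebraMap_residueField_eq_zero, ← Ideal.mem_comap, hPθ] at hs
    exact hs
  obtain ⟨γ, hγ⟩ := mem_range hinj (hb.map (algebraMap D P.ResidueField))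
  have hγroot : IsAppellRoot a q γ := .of_map hinj <| by
    rw [hγ]
    exact hb.map (algebraMap D P.ResidueField)
  refine ⟨γ, hγroot, nilpotent_iff_mem_prime.mpr fun Q hQ => ?_⟩
  have : CharZero Q.ResidueField := charZero_of_injective_ringHom
    ((algebraMap D Q.ResidueField).comp (θ.comp (algebraMap ℚ S))).injective
  rw [← Ideal.algebraMap_residueField_eq_zero, map_sub, sub_eq_zero]
  exact (hb.map _).unique ((hγroot.map θ).map _)

end IsAppellRoot

end AppellPolynomials

section UmbralFunctional

variable {D : Type*} [CommRing D]

theorem linearMap_add_C_pow (Λ : D[X] →ₗ[D] D) (p : D[X]) (c : D) (n : ℕ) :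
    Λ ((p + C c) ^ n) = ∑ i ∈ Finset.range (n + 1), n.choose i * Λ (p ^ i) * c ^ (n - i) := by
  rw [add_pow, map_sum]
  refine Finset.sum_congr rfl fun i _ => ?_
  have : p ^ i * C c ^ (n - i) * (n.choose i : D[X]) = (n.choose i * c ^ (n - i)) • p ^ i := by
    rw [smul_eq_C_mul, C_mul, C_pow, C_eq_natCast]
    ring
  rw [this, map_smul, smul_eq_mul]
  ring

-- Expand `Λ (((X - C b) + C b) ^ n) = Λ (X ^ n)`.
theorem isAppellRoot_linearMap {Λ : D[X] →ₗ[D] D} {q : ℕ} (h_one : Λ 1 = 1)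
    (h_pow : ∀ n ∈ Set.Icc (q + 1) (2 * q + 1), Λ (X ^ n) = 0) (b : D) :
    IsAppellRoot (fun i => Λ ((X - C b) ^ i)) q b := by
  intro n hn
  have h := linearMap_add_C_pow Λ (X - C b) b n
  rw [sub_add_cancel, h_pow n hn, sum_range_succ_eq_add_sum_Icc] at h
  rw [eval_appellPolynomial, h]
  simp [h_one]

theorem linearMap_X_sub_C_add_pow_mem {Λ : D[X] →ₗ[D] D} {J : Ideal D} {j k : D} (hj : j ∈ J)
    (h : ∀ i, Λ ((X - C k) ^ i) ∈ J ^ i) (n : ℕ) : Λ ((X - C (j + k)) ^ n) ∈ J ^ n := by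
  have hX : X - C (j + k) = X - C k + C (-j) := by
    rw [C_neg, C_add]
    ring
  rw [hX, linearMap_add_C_pow]
  refine sum_mem fun i hi => ?_
  rw [mul_assoc, ← pow_mul_pow_sub J (Finset.mem_range_succ_iff.mp hi)]
  exact Ideal.mul_mem_left _ _ (Ideal.mul_mem_mul (h i) (Ideal.pow_mem_pow (neg_mem hj) _))

/-- Evaluation at `k` of the part of degree at most `q` of a polynomial, as a linear functional. -/
noncomputable def truncatedEval (k : D) (q : ℕ) : D[X] →ₗ[D] D :=
  ∑ l ∈ Finset.range (q + 1), k ^ l • lcoeff D l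

theorem truncatedEval_X_pow (k : D) (q n : ℕ) :
    truncatedEval k q (X ^ n) = if n ≤ q then k ^ n else 0 := by
  simp [truncatedEval, coeff_X_pow]

theorem truncatedEval_X_sub_C_pow_mem {J : Ideal D} {k : D} {q : ℕ}
    (hk : ∀ n, q < n → k ^ n ∈ J ^ n) (i : ℕ) : truncatedEval k q ((X - C k) ^ i) ∈ J ^ i := by
  rw [sub_eq_add_neg, ← C_neg, linearMap_add_C_pow]
  simp only [truncatedEval_X_pow]
  rcases le_or_gt i q with hi | hi
  · have hsum : ∑ l ∈ Finset.range (i + 1),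
        i.choose l * (if l ≤ q then k ^ l else 0) * (-k) ^ (i - l) = (k + -k) ^ i := by
      rw [add_pow]
      refine Finset.sum_congr rfl fun l hl => ?_
      rw [if_pos ((Finset.mem_range_succ_iff.mp hl).trans hi)]
      ring
    rw [hsum, add_neg_cancel]
    obtain rfl | hi0 := eq_or_ne i 0 <;> simp [*]
  · refine sum_mem fun l hl => ?_
    split_ifs
    · rw [mul_assoc, neg_pow, mul_left_comm (k ^ l),
        pow_mul_pow_sub k (Finset.mem_range_succ_iff.mp hl)]
      exact Ideal.mul_mem_left _ _ (Ideal.mul_mem_left _ _ (hk i hi))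
    · simp

theorem WSubIdeal.add_of_pow_mem {J : Ideal D} {j k : D} {q : ℕ} (hj : j ∈ J)
    (hk : ∀ n, q < n → k ^ n ∈ J ^ n) : WSubIdeal J (j + k) := by
  refine wSubIdeal_iff_exists_isAppellRoot.mpr ⟨q, _,
    linearMap_X_sub_C_add_pow_mem hj (truncatedEval_X_sub_C_pow_mem hk),
    isAppellRoot_linearMap ?_ (fun n hn => ?_) (j + k)⟩
  · simpa using truncatedEval_X_pow k q 0
  · rw [truncatedEval_X_pow, if_neg (Nat.not_le.mpr hn.1)]

theorem IsReduction.wSubIdeal_add {I J : Ideal D} (h : IsReduction J I) (hI : I.FG) {j k : D}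
    (hj : j ∈ J) (hk : MemIgt I k) : WSubIdeal J (j + k) := by
  obtain ⟨c, hc⟩ := h.exists_pow_add_le hI
  obtain ⟨q, hq⟩ := eventually_atTop.mp (hk.eventually_pow_mem c)
  exact .add_of_pow_mem hj fun n hn => hc n (hq n hn.le)

end UmbralFunctional

section HomogeneousPolynomials

variable {ι A B : Type*} [CommRing A] [CommRing B] {n : ℕ} {F : MvPolynomial ι A}

theorem exists_isHomogeneous_map_eq {f : A →+* B} (hf : Function.Surjective f)
    {G : MvPolynomial ι B} (hG : G.IsHomogeneous n) :
    ∃ F : MvPolynomial ι A, F.IsHomogeneous n ∧ F.map f = G := by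
  obtain ⟨F, rfl⟩ := MvPolynomial.map_surjective f hf G
  refine ⟨_, MvPolynomial.homogeneousComponent_isHomogeneous n F, ?_⟩
  rw [← MvPolynomial.homogeneousComponent_eq_self hG]
  ext d
  simp only [MvPolynomial.coeff_map, MvPolynomial.coeff_homogeneousComponent]
  split_ifs <;> simp

variable [Algebra A B]

theorem aeval_mul_of_isHomogeneous (hF : F.IsHomogeneous n) (r : B) (v : ι → B) :
    MvPolynomial.aeval (fun i => r * v i) F = r ^ n * MvPolynomial.aeval v F := by
  rw [MvPolynomial.aeval_def, MvPolynomial.aeval_def, MvPolynomial.eval₂_eq,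
    MvPolynomial.eval₂_eq, Finset.mul_sum]
  refine Finset.sum_congr rfl fun d hd => ?_
  simp_rw [mul_pow]
  rw [Finset.prod_mul_distrib, Finset.prod_pow_eq_pow_sum, hF.degree_eq_sum_deg_support hd]
  ring

theorem aeval_X_mul_C_of_isHomogeneous (hF : F.IsHomogeneous n) (x : ι → B) :
    MvPolynomial.aeval (fun i => (X * C (x i) : B[X])) F = X ^ n * C (MvPolynomial.aeval x F) := by
  rw [aeval_mul_of_isHomogeneous hF]
  exact congrArg _ (MvPolynomial.aeval_algebraMap_apply B[X] x F)

theorem coeff_aeval_X_mul_C (F : MvPolynomial ι A) (x : ι → B) (n : ℕ) :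
    (MvPolynomial.aeval (fun i => (X * C (x i) : B[X])) F).coeff n =
      MvPolynomial.aeval x (MvPolynomial.homogeneousComponent n F) := by
  conv_lhs => rw [← MvPolynomial.sum_homogeneousComponent F, map_sum, finsetSum_coeff]
  simp_rw [aeval_X_mul_C_of_isHomogeneous (MvPolynomial.homogeneousComponent_isHomogeneous _ F) x,
    X_pow_mul, coeff_C_mul_X_pow]
  rw [Finset.sum_ite_eq]
  split_ifs with h
  · rfl
  · rw [MvPolynomial.homogeneousComponent_eq_zero n F (by simpa using h), map_zero]

theorem isHomogeneous_of_aeval_X_mul_C_X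
    (hF : MvPolynomial.aeval (fun i => (X * C (MvPolynomial.X i) : (MvPolynomial ι A)[X])) F =
      X ^ n * C F) : F.IsHomogeneous n := by
  have h := coeff_aeval_X_mul_C F (MvPolynomial.X : ι → MvPolynomial ι A) n
  rw [hF, X_pow_mul, coeff_C_mul_X_pow, if_pos rfl, MvPolynomial.aeval_X_left_apply] at h
  exact h ▸ MvPolynomial.homogeneousComponent_isHomogeneous n F

-- The grading automorphism `X i ↦ T * X i` and multiplication by `T` send `γ` to two solutions of
-- the same system, so they agree.
theorem IsAppellRoot.isHomogeneous_one [IsDomain A] [CharZero A] {α : ℕ → MvPolynomial ι A}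
    (hα : ∀ i, (α i).IsHomogeneous i) {q : ℕ} {γ : MvPolynomial ι A} (hγ : IsAppellRoot α q γ) :
    γ.IsHomogeneous 1 := by
  let σ : MvPolynomial ι A →ₐ[A] (MvPolynomial ι A)[X] :=
    MvPolynomial.aeval fun i => X * C (MvPolynomial.X i)
  have hσ : (fun i => (σ : MvPolynomial ι A →+* (MvPolynomial ι A)[X]) (α i)) =
      fun i => X ^ i * C (α i) := by
    ext1 i
    exact (aeval_X_mul_C_of_isHomogeneous (hα i) MvPolynomial.X).trans
      (by rw [MvPolynomial.aeval_X_left_apply])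
  refine isHomogeneous_of_aeval_X_mul_C_X ?_
  rw [pow_one]
  exact IsAppellRoot.unique (hσ ▸ hγ.map (σ : MvPolynomial ι A →+* (MvPolynomial ι A)[X]))
    ((hγ.map C).mul_left X)

end HomogeneousPolynomials

section AnalyticIndependence

open IsLocalRing

variable {ι A : Type*} [CommRing A]

theorem eval_mem_pow_of_isHomogeneous {J : Ideal A} {y : ι → A} (hy : ∀ i, y i ∈ J) {n : ℕ}
    {F : MvPolynomial ι A} (hF : F.IsHomogeneous n) : F.eval y ∈ J ^ n :=
  Ideal.pow_right_mono (Ideal.span_le.mpr (Set.range_subset_iff.mpr hy)) n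
    ((Ideal.mem_span_pow_iff_exists_isHomogeneous y _).mpr ⟨F, hF, rfl⟩)

theorem eval_sub_eval_mem_of_isHomogeneous_one {K : Ideal A} {y z : ι → A}
    (hyz : ∀ i, y i - z i ∈ K) {F : MvPolynomial ι A} (hF : F.IsHomogeneous 1) :
    F.eval y - F.eval z ∈ K := by
  rw [← MvPolynomial.mem_homogeneousSubmodule,
    MvPolynomial.homogeneousSubmodule_one_eq_span_X] at hF
  induction hF using Submodule.span_induction with
  | mem F h =>
    obtain ⟨i, rfl⟩ := h
    simpa using hyz i
  | zero => simp
  | add F G _ _ hF hG =>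
    rw [map_add, map_add, add_sub_add_comm]
    exact add_mem hF hG
  | smul c F _ hF =>
    rw [MvPolynomial.smul_eval, MvPolynomial.smul_eval, ← mul_sub]
    exact Ideal.mul_mem_left _ _ hF

theorem eval_sub_eval_mem_of_isHomogeneous {J K : Ideal A} {y z : ι → A} (hy : ∀ i, y i ∈ J)
    (hz : ∀ i, z i ∈ J) (hyz : ∀ i, y i - z i ∈ K) {n : ℕ} {F : MvPolynomial ι A}
    (hF : F.IsHomogeneous (n + 1)) : F.eval y - F.eval z ∈ K * J ^ n := by
  induction n generalizing F with
  | zero => simpa using eval_sub_eval_mem_of_isHomogeneous_one hyz hF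
  | succ n ih =>
    rw [← MvPolynomial.mem_homogeneousSubmodule, ← MvPolynomial.homogeneousSubmodule_one_pow,
      pow_succ', MvPolynomial.homogeneousSubmodule_one_pow] at hF
    induction hF using Submodule.mul_induction_on' with
    | mem_mul_mem G hG H hH =>
      have hsplit : (G * H).eval y - (G * H).eval z =
          (G.eval y - G.eval z) * H.eval y + G.eval z * (H.eval y - H.eval z) := by
        rw [map_mul, map_mul]
        ring
      rw [hsplit]
      refine add_mem (Ideal.mul_mem_mul (eval_sub_eval_mem_of_isHomogeneous_one hyz hG)
        (eval_mem_pow_of_isHomogeneous hy hH)) ?_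
      rw [pow_succ', mul_left_comm]
      exact Ideal.mul_mem_mul (by simpa using eval_mem_pow_of_isHomogeneous hz hG) (ih hH)
    | add G _ H _ hG hH =>
      rw [map_add, map_add, add_sub_add_comm]
      exact add_mem hG hH

/-- The elements `c i₀ * x i - c i * x i₀`, which vanish modulo `x i₀` exactly when the ratios of
the `x i` are those of the `c i`: they are the `2 × 2` minors of the matrix with rows `c` and `x`
that involve the column `i₀`. -/
def pivotMinor (c x : ι → A) (i₀ : ι) (i : ι) : A :=
  c i₀ * x i - c i * x i₀

theorem pivotMinor_self (c x : ι → A) (i₀ : ι) : pivotMinor c x i₀ i₀ = 0 :=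
  sub_self _

theorem span_pivotMinor_le (c x : ι → A) (i₀ : ι) :
    Ideal.span (Set.range (pivotMinor c x i₀)) ≤ Ideal.span (Set.range x) := by
  refine Ideal.span_le.mpr (Set.range_subset_iff.mpr fun i => sub_mem ?_ ?_) <;>
    exact Ideal.mul_mem_left _ _ (Ideal.subset_span ⟨_, rfl⟩)

theorem span_pivotMinor_sup_span_singleton {c : ι → A} {i₀ : ι} (hc : IsUnit (c i₀)) (x : ι → A) :
    Ideal.span (Set.range (pivotMinor c x i₀)) ⊔ Ideal.span {x i₀} = Ideal.span (Set.range x) := by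
  refine le_antisymm (sup_le (span_pivotMinor_le c x i₀) ?_) ?_
  · exact Ideal.span_mono (Set.singleton_subset_iff.mpr ⟨i₀, rfl⟩)
  · refine Ideal.span_le.mpr (Set.range_subset_iff.mpr fun i => ?_)
    refine (Ideal.unit_mul_mem_iff_mem _ hc).mp ?_
    rw [← sub_add_cancel (c i₀ * x i) (c i * x i₀)]
    exact add_mem (Ideal.mem_sup_left (Ideal.subset_span ⟨i, rfl⟩))
      (Ideal.mem_sup_right (Ideal.mul_mem_left _ _ (Ideal.mem_span_singleton_self _)))

-- `F (c i₀ * x)` and `F (x i₀ * c)` differ by an element of `K * J ^ n`, where `K` is generated by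
-- the pivot minors.
theorem pow_mem_sup_of_eval_mem {c x : ι → A} {i₀ : ι} {n : ℕ} {F : MvPolynomial ι A}
    (hF : F.IsHomogeneous (n + 1)) (hFc : IsUnit (F.eval c)) {M : Ideal A} (hFx : F.eval x ∈ M) :
    x i₀ ^ (n + 1) ∈
      Ideal.span (Set.range (pivotMinor c x i₀)) * Ideal.span (Set.range x) ^ n ⊔ M := by
  have hx : ∀ i, x i ∈ Ideal.span (Set.range x) := fun i => Ideal.subset_span ⟨i, rfl⟩
  have hdiff := eval_sub_eval_mem_of_isHomogeneous (y := fun i => c i₀ * x i)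
    (z := fun i => x i₀ * c i) (K := Ideal.span (Set.range (pivotMinor c x i₀)))
    (fun i => Ideal.mul_mem_left _ _ (hx i)) (fun i => Ideal.mul_mem_right _ _ (hx i₀))
    (fun i => Ideal.subset_span ⟨i, by rw [pivotMinor, mul_comm (x i₀)]⟩) hF
  have heval : ∀ (r : A) (v : ι → A), F.eval (fun i => r * v i) = r ^ (n + 1) * F.eval v :=
    fun r v => by simpa using aeval_mul_of_isHomogeneous hF r v
  rw [heval, heval] at hdiff
  refine (Ideal.mul_unit_mem_iff_mem _ hFc).mp ?_
  rw [← sub_sub_self (c i₀ ^ (n + 1) * F.eval x) (x i₀ ^ (n + 1) * F.eval c)]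
  exact sub_mem (Ideal.mem_sup_right (Ideal.mul_mem_left _ _ hFx)) (Ideal.mem_sup_left hdiff)

theorem spanFinrank_span_range_lt_card [Fintype ι] {w : ι → A} {i₀ : ι} (hw : w i₀ = 0) :
    (Ideal.span (Set.range w)).spanFinrank < Fintype.card ι := by
  have hspan : Ideal.span (Set.range w) = Submodule.span A (w '' {i₀}ᶜ) := by
    refine le_antisymm (Ideal.span_le.mpr (Set.range_subset_iff.mpr fun i => ?_))
      (Submodule.span_mono (Set.image_subset_range w _))
    obtain rfl | hi := eq_or_ne i i₀
    · exact hw ▸ zero_mem _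
    · exact Submodule.subset_span ⟨i, hi, rfl⟩
  rw [hspan]
  refine (Submodule.spanFinrank_span_le_ncard_of_finite (Set.toFinite _)).trans_lt ?_
  refine (Set.ncard_image_le (Set.toFinite _)).trans_lt ?_
  rw [← Nat.card_eq_fintype_card, ← Set.ncard_univ]
  exact Set.ncard_lt_ncard (Set.compl_ssubset_univ.mpr (Set.singleton_nonempty i₀))

variable [IsLocalRing A]

theorem exists_isUnit_eval [Infinite (ResidueField A)] {F : MvPolynomial ι A}
    (hF : F.map (residue A) ≠ 0) : ∃ c, IsUnit (F.eval c) := by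
  obtain ⟨d, hd⟩ : ∃ d, (F.map (residue A)).eval d ≠ 0 := by
    by_contra! h
    exact hF (MvPolynomial.funext fun d => by rw [h, map_zero])
  obtain ⟨c, rfl⟩ := residue_surjective.comp_left d
  refine ⟨c, ?_⟩
  rwa [← residue_ne_zero_iff_isUnit, MvPolynomial.eval₂_comp, ← MvPolynomial.eval_map]

theorem exists_isUnit_of_isUnit_eval {n : ℕ} {F : MvPolynomial ι A} (hF : F.IsHomogeneous (n + 1))
    {c : ι → A} (hFc : IsUnit (F.eval c)) : ∃ i, IsUnit (c i) := by
  by_contra! hc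
  have hmem : F.eval c ∈ maximalIdeal A ^ (n + 1) :=
    eval_mem_pow_of_isHomogeneous (fun i => (mem_maximalIdeal _).mpr (hc i)) hF
  exact (mem_maximalIdeal _).mp (Ideal.pow_le_self n.succ_ne_zero hmem) hFc

/-- Analytic independence of the family `x` in the local ring `(A, m)`: a form of degree `n` whose
value at `x` lies in `m (x)ⁿ` has all its coefficients in `m`. The latter is expressed by the
vanishing of its image over the residue field. -/
def IsAnalyticallyIndependent (x : ι → A) : Prop :=
  ∀ (n : ℕ) (F : MvPolynomial ι A), F.IsHomogeneous n →
    F.eval x ∈ maximalIdeal A * Ideal.span (Set.range x) ^ n → F.map (residue A) = 0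

theorem map_residue_eq_zero_of_isHomogeneous_zero {F : MvPolynomial ι A} (hF : F.IsHomogeneous 0)
    {x : ι → A} (hFx : F.eval x ∈ maximalIdeal A) : F.map (residue A) = 0 := by
  rw [← MvPolynomial.mem_homogeneousSubmodule, MvPolynomial.homogeneousSubmodule_zero] at hF
  obtain ⟨c, rfl⟩ := Submodule.mem_one.mp hF
  have hc : residue A c = 0 := (residue_eq_zero_iff c).mpr (by simpa using hFx)
  simp [MvPolynomial.algebraMap_eq, hc]

theorem pow_succ_le_span_pivotMinor_mul [Finite ι] {c x : ι → A} {i₀ : ι} (hc : IsUnit (c i₀))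
    {n : ℕ} {F : MvPolynomial ι A} (hF : F.IsHomogeneous (n + 1)) (hFc : IsUnit (F.eval c))
    (hFx : F.eval x ∈ maximalIdeal A * Ideal.span (Set.range x) ^ (n + 1)) :
    Ideal.span (Set.range x) ^ (n + 1) ≤
      Ideal.span (Set.range (pivotMinor c x i₀)) * Ideal.span (Set.range x) ^ n := by
  refine Submodule.le_of_le_smul_of_le_jacobson_bot (I := maximalIdeal A)
    (Ideal.FG.pow (Submodule.fg_span (Set.finite_range x))) (maximalIdeal_le_jacobson _) ?_
  have h := ideal_sup_pow_succ_le (Ideal.span (Set.range (pivotMinor c x i₀)))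
    (Ideal.span {x i₀}) n
  rw [span_pivotMinor_sup_span_singleton hc, Ideal.span_singleton_pow] at h
  exact h.trans (sup_le le_sup_left
    ((Ideal.span_singleton_le_iff_mem _).mpr (pow_mem_sup_of_eval_mem hF hFc hFx)))

theorem IsMinimalReduction.isAnalyticallyIndependent [Infinite (ResidueField A)] [Fintype ι]
    {I : Ideal A} {x : ι → A} (h : IsMinimalReduction (Ideal.span (Set.range x)) I)
    (hcard : Fintype.card ι ≤ (Ideal.span (Set.range x)).spanFinrank) :
    IsAnalyticallyIndependent x := by
  intro n F hF hFx
  rcases n with _ | n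
  · exact map_residue_eq_zero_of_isHomogeneous_zero hF (by simpa using hFx)
  by_contra hne
  obtain ⟨c, hFc⟩ := exists_isUnit_eval hne
  obtain ⟨i₀, hc⟩ := exists_isUnit_of_isUnit_eval hF hFc
  have heq : Ideal.span (Set.range (pivotMinor c x i₀)) = Ideal.span (Set.range x) :=
    h.eq_of_pow_succ_le (Submodule.fg_span (Set.finite_range x)) (span_pivotMinor_le c x i₀)
      (pow_succ_le_span_pivotMinor_mul hc hF hFc hFx)
  have hlt := spanFinrank_span_range_lt_card (pivotMinor_self c x i₀)
  rw [heq] at hlt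
  exact hcard.not_gt hlt

theorem IsMinimalReduction.exists_finset_isAnalyticallyIndependent [Infinite (ResidueField A)]
    {I J : Ideal A} (h : IsMinimalReduction J I) (hJ : J.FG) :
    ∃ s : Finset A, Ideal.span (Set.range ((↑) : s → A)) = J ∧
      IsAnalyticallyIndependent ((↑) : s → A) := by
  obtain ⟨s, hcard, hs⟩ := Submodule.FG.exists_span_finset_card_eq_spanFinrank hJ
  have hspan : Ideal.span (Set.range ((↑) : s → A)) = J := by
    rw [Subtype.range_coe_subtype]
    exact hs
  subst hspan
  exact ⟨s, rfl, h.isAnalyticallyIndependent (by rw [← hcard, Fintype.card_coe])⟩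

end AnalyticIndependence

section FiberRing

open IsLocalRing

variable {ι A : Type*} [CommRing A] {L : Ideal A} {b : A} {x : ι → A}

/-- An element of `L` placed in degree one of the Rees algebra of `L`. -/
noncomputable def reesMonomial (hb : b ∈ L) : reesAlgebra L :=
  ⟨X * C b, by
    rw [X_mul_C, C_mul_X_eq_monomial]
    exact reesAlgebra.monomial_mem.mpr (by simpa using hb)⟩

/-- Evaluation of polynomials at the elements `x i`, placed in degree one of the Rees algebra. -/
noncomputable def reesEval (hx : ∀ i, x i ∈ L) : MvPolynomial ι A →ₐ[A] reesAlgebra L :=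
  MvPolynomial.aeval fun i => reesMonomial (hx i)

theorem coe_reesEval (hx : ∀ i, x i ∈ L) (F : MvPolynomial ι A) :
    (reesEval hx F : A[X]) = MvPolynomial.aeval (fun i => X * C (x i)) F :=
  MvPolynomial.comp_aeval_apply (fun i => reesMonomial (hx i)) (reesAlgebra L).val F

theorem coe_reesEval_of_isHomogeneous (hx : ∀ i, x i ∈ L) {n : ℕ} {F : MvPolynomial ι A}
    (hF : F.IsHomogeneous n) : (reesEval hx F : A[X]) = X ^ n * C (F.eval x) :=
  (coe_reesEval hx F).trans (aeval_X_mul_C_of_isHomogeneous hF x)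

theorem coeff_reesEval (hx : ∀ i, x i ∈ L) (F : MvPolynomial ι A) (n : ℕ) :
    (reesEval hx F : A[X]).coeff n = (MvPolynomial.homogeneousComponent n F).eval x := by
  rw [coe_reesEval]
  exact coeff_aeval_X_mul_C F x n

theorem isAppellRoot_reesMonomial (hx : ∀ i, x i ∈ L) (hb : b ∈ L) {F : ℕ → MvPolynomial ι A}
    (hF : ∀ i, (F i).IsHomogeneous i) {q : ℕ}
    (h : IsAppellRoot (fun i => (F i).eval x) q b) :
    IsAppellRoot (fun i => reesEval hx (F i)) q (reesMonomial hb) := by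
  refine .of_map (φ := ((reesAlgebra L).val : reesAlgebra L →+* A[X])) Subtype.val_injective ?_
  simp only [RingHom.coe_coe, Subalgebra.coe_val, coe_reesEval_of_isHomogeneous hx (hF _)]
  exact (h.map C).mul_left X

theorem coeff_mem_of_mem_map_reesAlgebra {𝔞 : Ideal A} {p : reesAlgebra L}
    (hp : p ∈ 𝔞.map (algebraMap A (reesAlgebra L))) (n : ℕ) :
    (p : A[X]).coeff n ∈ 𝔞 * L ^ n := by
  induction hp using Submodule.span_induction generalizing n with
  | mem p h =>
    obtain ⟨a, ha, rfl⟩ := h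
    rcases n with _ | n
    · simpa using ha
    · simp
  | zero => simp
  | add p q _ _ hp hq => simpa using add_mem (hp n) (hq n)
  | smul r p _ hp =>
    rw [smul_eq_mul, MulMemClass.coe_mul, coeff_mul]
    refine sum_mem fun ij hij => ?_
    rw [← Finset.HasAntidiagonal.mem_antidiagonal.mp hij, pow_add, mul_left_comm]
    exact Ideal.mul_mem_mul (r.2 _) (hp _)

variable [IsLocalRing A]

/-- The fiber ring `⨁ Lⁿ / m Lⁿ` of the ideal `L` of the local ring `(A, m)`, as a quotient of the
Rees algebra. -/
abbrev FiberRing (L : Ideal A) : Type _ :=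
  reesAlgebra L ⧸ (maximalIdeal A).map (algebraMap A (reesAlgebra L))

/-- The structure map of the fiber ring as an algebra over the residue field. -/
noncomputable def residueToFiberRing (L : Ideal A) : ResidueField A →+* FiberRing L :=
  Ideal.Quotient.lift (maximalIdeal A) ((Ideal.Quotient.mk _).comp (algebraMap A (reesAlgebra L)))
    fun _ ha => Ideal.Quotient.eq_zero_iff_mem.mpr (Ideal.mem_map_of_mem _ ha)

/-- Evaluation of polynomials over the residue field at the classes of the elements `x i` in degree
one of the fiber ring. -/
noncomputable def fiberEval (hx : ∀ i, x i ∈ L) :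
    MvPolynomial ι (ResidueField A) →+* FiberRing L :=
  MvPolynomial.eval₂Hom (residueToFiberRing L) fun i => Ideal.Quotient.mk _ (reesMonomial (hx i))

theorem fiberEval_map_residue (hx : ∀ i, x i ∈ L) (F : MvPolynomial ι A) :
    fiberEval hx (F.map (residue A)) = Ideal.Quotient.mk _ (reesEval hx F) := by
  have h : (fiberEval hx).comp (MvPolynomial.map (residue A)) =
      (Ideal.Quotient.mk _).comp (reesEval hx : MvPolynomial ι A →+* reesAlgebra L) := by
    refine MvPolynomial.ringHom_ext (fun a => ?_) fun i => ?_
    · rw [RingHom.comp_apply, MvPolynomial.map_C, fiberEval, MvPolynomial.eval₂Hom_C]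
      exact congrArg (Ideal.Quotient.mk _) ((reesEval hx).commutes a).symm
    · rw [RingHom.comp_apply, MvPolynomial.map_X, fiberEval, MvPolynomial.eval₂Hom_X']
      exact congrArg (Ideal.Quotient.mk _)
        (MvPolynomial.aeval_X (fun i => reesMonomial (hx i)) i).symm
  exact RingHom.congr_fun h F

theorem IsAnalyticallyIndependent.map_residue_eq_zero (hind : IsAnalyticallyIndependent x)
    (hxm : ∀ i, x i ∈ maximalIdeal A) {e c : ℕ} (he : maximalIdeal A ^ e ≤ L)
    (hL : ∀ N, L ^ (N + c) ≤ Ideal.span (Set.range x) ^ N) {n : ℕ} {F : MvPolynomial ι A}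
    (hF : F.IsHomogeneous n) (hFx : F.eval x ∈ maximalIdeal A * L ^ n) :
    F.map (residue A) = 0 := by
  have hpow : (F ^ (e * (c + 1))).eval x ∈
      maximalIdeal A * Ideal.span (Set.range x) ^ (n * (e * (c + 1))) := by
    have h := pow_mul_pow_le_pow_succ hL he n (Ideal.pow_mem_pow hFx (e * (c + 1)))
    rw [pow_succ'] at h
    rw [map_pow]
    exact Ideal.mul_mono_left (Ideal.span_le.mpr (Set.range_subset_iff.mpr hxm)) h
  have h := hind _ _ (hF.pow _) hpow
  rw [map_pow] at h
  exact eq_zero_of_pow_eq_zero h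

theorem fiberEval_injective (hx : ∀ i, x i ∈ L) (hind : IsAnalyticallyIndependent x)
    (hxm : ∀ i, x i ∈ maximalIdeal A) {e c : ℕ} (he : maximalIdeal A ^ e ≤ L)
    (hL : ∀ N, L ^ (N + c) ≤ Ideal.span (Set.range x) ^ N) :
    Function.Injective (fiberEval hx) := by
  refine (injective_iff_map_eq_zero _).mpr fun G hG => ?_
  obtain ⟨F, rfl⟩ := MvPolynomial.map_surjective _ residue_surjective G
  rw [fiberEval_map_residue, Ideal.Quotient.eq_zero_iff_mem] at hG
  rw [← MvPolynomial.sum_homogeneousComponent F, map_sum]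
  refine Finset.sum_eq_zero fun n _ => hind.map_residue_eq_zero hxm he hL
    (MvPolynomial.homogeneousComponent_isHomogeneous n F) ?_
  rw [← coeff_reesEval hx]
  exact coeff_mem_of_mem_map_reesAlgebra hG n

theorem exists_sub_pow_mem_of_isNilpotent (hx : ∀ i, x i ∈ L) (hb : b ∈ L)
    {F : MvPolynomial ι A} (hF : F.IsHomogeneous 1)
    (h : IsNilpotent (Ideal.Quotient.mk _ (reesMonomial hb) - fiberEval hx (F.map (residue A)))) :
    ∃ N, (b - F.eval x) ^ N ∈ maximalIdeal A * L ^ N := by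
  obtain ⟨N, hN⟩ := h
  rw [fiberEval_map_residue, ← map_sub, ← map_pow, Ideal.Quotient.eq_zero_iff_mem] at hN
  have hcoe : ((reesMonomial hb - reesEval hx F : reesAlgebra L) : A[X]) =
      X * C (b - F.eval x) := by
    rw [AddSubgroupClass.coe_sub, coe_reesEval_of_isHomogeneous hx hF, reesMonomial, pow_one,
      ← mul_sub, ← C_sub]
  have hcoeff := coeff_mem_of_mem_map_reesAlgebra hN N
  rw [SubmonoidClass.coe_pow, hcoe, mul_pow, ← C_pow, X_pow_mul, coeff_C_mul_X_pow,
    if_pos rfl] at hcoeff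
  exact ⟨N, hcoeff⟩

theorem IsAnalyticallyIndependent.exists_sub_pow_mem [CharZero (ResidueField A)]
    (hind : IsAnalyticallyIndependent x) (hxm : ∀ i, x i ∈ maximalIdeal A)
    (hx : ∀ i, x i ∈ L) {e c : ℕ} (he : maximalIdeal A ^ e ≤ L)
    (hL : ∀ N, L ^ (N + c) ≤ Ideal.span (Set.range x) ^ N) (hbL : b ∈ L)
    (hb : WSubIdeal (Ideal.span (Set.range x)) b) :
    ∃ j ∈ Ideal.span (Set.range x), ∃ N, (b - j) ^ N ∈ maximalIdeal A * L ^ N := by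
  obtain ⟨q, a, ha, hroot⟩ := wSubIdeal_iff_exists_isAppellRoot.mp hb
  choose F hF hFa using fun i => (Ideal.mem_span_pow_iff_exists_isHomogeneous x (a i)).mp (ha i)
  obtain rfl : (fun i => (F i).eval x) = a := funext hFa
  have hfiber := (isAppellRoot_reesMonomial hx hbL hF hroot).map (E := FiberRing L)
    (Ideal.Quotient.mk _)
  simp only [← fiberEval_map_residue] at hfiber
  obtain ⟨γ, hγ, hnil⟩ := hfiber.exists_isNilpotent_sub (fiberEval_injective hx hind hxm he hL)
  obtain ⟨G, hG, rfl⟩ := exists_isHomogeneous_map_eq residue_surjective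
    (hγ.isHomogeneous_one fun i => (hF i).map _)
  refine ⟨G.eval x, ?_, exists_sub_pow_mem_of_isNilpotent hx hbL hG hnil⟩
  simpa using eval_mem_pow_of_isHomogeneous (fun i => Ideal.subset_span (Set.mem_range_self i)) hG

theorem IsAnalyticallyIndependent.exists_memIgt_sub [CharZero (ResidueField A)]
    (hind : IsAnalyticallyIndependent x) (hxm : ∀ i, x i ∈ maximalIdeal A) {e : ℕ}
    (he : maximalIdeal A ^ e ≤ Ideal.span (Set.range x))
    (hb : WSubIdeal (Ideal.span (Set.range x)) b) :
    ∃ j ∈ Ideal.span (Set.range x), MemIgt (Ideal.span (Set.range x)) (b - j) := by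
  obtain ⟨c, hc⟩ := hb.integralOverIdeal.exists_sup_pow_add_le
  have heL := he.trans (le_sup_left (b := Ideal.span {b}))
  obtain ⟨j, hj, N, hN⟩ := hind.exists_sub_pow_mem hxm
    (fun i => Ideal.mem_sup_left (Ideal.subset_span (Set.mem_range_self i))) heL hc
    (Ideal.mem_sup_right (Ideal.mem_span_singleton_self b)) hb
  refine ⟨j, hj, .of_pow_mem (n := N * (e * (c + 1))) ?_⟩
  rw [pow_mul]
  exact pow_mul_pow_le_pow_succ hc heL N (Ideal.pow_mem_pow hN _)

end FiberRing

section MaximalIdealFG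

open IsLocalRing

variable {A : Type*} [CommRing A] [IsLocalRing A] {J : Ideal A}

theorem isNoetherianRing_quotient_maximalIdeal_pow (hm : (maximalIdeal A).FG) (e : ℕ) :
    IsNoetherianRing (A ⧸ maximalIdeal A ^ e) := by
  refine .of_prime fun P hP => ?_
  have hcomap : P.comap (Ideal.Quotient.mk (maximalIdeal A ^ e)) = maximalIdeal A := by
    refine le_antisymm (le_maximalIdeal Ideal.IsPrime.ne_top') fun y hy => ?_
    refine hP.mem_of_pow_mem e ?_
    rw [← map_pow, Ideal.Quotient.eq_zero_iff_mem.mpr (Ideal.pow_mem_pow hy e)]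
    exact zero_mem P
  rw [← Ideal.map_comap_of_surjective _ Ideal.Quotient.mk_surjective P, hcomap]
  exact hm.map _

theorem fg_of_maximalIdeal_pow_le (hm : (maximalIdeal A).FG) {e : ℕ}
    (he : maximalIdeal A ^ e ≤ J) : J.FG := by
  have := isNoetherianRing_quotient_maximalIdeal_pow hm e
  refine Ideal.fg_of_fg_map_of_fg_inf_ker_of_surjective
    (IsNoetherian.noetherian (J.map (Ideal.Quotient.mk (maximalIdeal A ^ e)))) ?_
    Ideal.Quotient.mk_surjective
  rw [Ideal.mk_ker, inf_eq_right.mpr he]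
  exact Ideal.FG.pow hm

end MaximalIdealFG

theorem weakSubintegralClosure_of_minimalReduction_general {A : Type*} [CommRing A]
    [IsLocalRing A] (hm : (IsLocalRing.maximalIdeal A).FG)
    [CharZero (IsLocalRing.ResidueField A)]
    (I : Ideal A) (hI : I.radical = IsLocalRing.maximalIdeal A)
    (J : Ideal A) (hJ : IsMinimalReduction J I)
    (K : Ideal A) (hK : ∀ x : A, x ∈ K ↔ MemIgt I x) (b : A) : b ∈ J + K ↔ WSubIdeal J b := by
  obtain ⟨e, he⟩ : ∃ e, IsLocalRing.maximalIdeal A ^ e ≤ J := by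
    have hrad := hJ.1.radical_eq.trans hI
    exact hrad ▸ J.exists_radical_pow_le_of_fg (hrad ▸ hm)
  have hIFG : I.FG := fg_of_maximalIdeal_pow_le hm (he.trans hJ.1.1)
  constructor
  · intro hb
    obtain ⟨j, hj, k, hk, rfl⟩ := Submodule.mem_sup.mp hb
    exact hJ.1.wSubIdeal_add hIFG hj ((hK k).mp hk)
  · intro hb
    have hJm : J ≤ IsLocalRing.maximalIdeal A := hI ▸ hJ.1.1.trans Ideal.le_radical
    have : Infinite (IsLocalRing.ResidueField A) := CharZero.infinite _
    obtain ⟨s, rfl, hs⟩ :=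
      hJ.exists_finset_isAnalyticallyIndependent (fg_of_maximalIdeal_pow_le hm he)
    obtain ⟨j, hj, hbj⟩ := hs.exists_memIgt_sub (fun i => hJm (Ideal.subset_span ⟨i, rfl⟩)) he hb
    exact Submodule.mem_sup.mpr ⟨j, hj, b - j, (hK _).mpr (hbj.mono hJ.1.1), add_sub_cancel j b⟩

/-- Theorem 4.8: let `(A,m,k)` be a Noetherian local ring with `k`
algebraically closed of characteristic 0, `I` an `m`-primary ideal, and `J` a minimal
reduction of `I`.  Then `J + I_> = *J`.  Here `K` is the ideal `I_>` (hypothesis `hK`),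
and `m`-primary is expressed by `rad I = m`. -/
theorem weakSubintegralClosure_of_minimalReduction {A : Type*} [CommRing A]
    [IsNoetherianRing A] [IsLocalRing A]
    [IsAlgClosed (IsLocalRing.ResidueField A)] [CharZero (IsLocalRing.ResidueField A)]
    (I : Ideal A) (hI : I.radical = IsLocalRing.maximalIdeal A)
    (J : Ideal A) (hJ : IsMinimalReduction J I)
    (K : Ideal A) (hK : ∀ x : A, x ∈ K ↔ MemIgt I x) :
    ∀ x : A, x ∈ J + K ↔ WSubIdeal J x :=
  weakSubintegralClosure_of_minimalReduction_general (IsNoetherian.noetherian _) I hI J hJ K hK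
end
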